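/- Let x : ℕ → ℝ be a sequence with 0 ≤ x_j ≤ 1 for all j, and for each i define R_i := { j ∈ ℕ | ⌊2^i · x_j⌋ is even }. If f : ℕ → ℕ is strictly monotone and the range of f is strongly cohesive for (R_i)_{i∈ℕ}, then the subsequence (x_{f(j)})_{j∈ℕ} is a Cauchy sequence, i.e. for every n there exists s such that |x_{f(v)} − x_{f(w)}| < 2^{−n} for all v, w ≥ s. -/

import Mathlib

theorem floor_eq_of_parity (a b : ℝ) (ha : 0 ≤ a ∧ a ≤ 1) (hb : 0 ≤ b ∧ b ≤ 1) (n : ℕ)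
    (h : ∀ i < n + 1, (Even ⌊(2 : ℝ) ^ i * a⌋ ↔ Even ⌊(2 : ℝ) ^ i * b⌋)) :
    ⌊(2 : ℝ) ^ n * a⌋ = ⌊(2 : ℝ) ^ n * b⌋ := by
  induction n with
  | zero =>
    have h0 := h 0 (by omega)
    simp only [pow_zero, one_mul] at h0 ⊢
    have key : ∀ c : ℝ, 0 ≤ c ∧ c ≤ 1 → 0 ≤ ⌊c⌋ ∧ ⌊c⌋ ≤ 1 := by
      intro c hc
      refine ⟨Int.floor_nonneg.2 hc.1, ?_⟩
      have h1 : (⌊c⌋ : ℝ) ≤ 1 := (Int.floor_le c).trans hc.2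
      exact_mod_cast h1
    have h1 := key a ha
    have h2 := key b hb
    rw [Int.even_iff, Int.even_iff] at h0
    omega
  | succ n ih =>
    have e := ih (fun i hi => h i (by omega))
    have h0 := h (n + 1) (by omega)
    have key : ∀ c : ℝ, 2 * ⌊(2 : ℝ) ^ n * c⌋ ≤ ⌊(2 : ℝ) ^ (n + 1) * c⌋ ∧
        ⌊(2 : ℝ) ^ (n + 1) * c⌋ < 2 * ⌊(2 : ℝ) ^ n * c⌋ + 2 := by
      intro c
      have h1 := Int.floor_le ((2 : ℝ) ^ n * c)
      have h2 := Int.lt_floor_add_one ((2 : ℝ) ^ n * c)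
      have h3 : (2 : ℝ) ^ (n + 1) * c = 2 * ((2 : ℝ) ^ n * c) := by ring
      rw [h3]
      constructor
      · rw [Int.le_floor]; push_cast; linarith
      · rw [Int.floor_lt]; push_cast; linarith
    have h1 := key a
    have h2 := key b
    rw [Int.even_iff, Int.even_iff] at h0
    omega


/-- If `(x_j)` is a sequence in `[0,1]`, `R_i = { j | ⌊2^i * x_j⌋ is even }`, and
`f` is strictly monotone with strongly cohesive range for `(R_i)`, then the
subsequence `(x_{f(j)})` is a Cauchy sequence. -/
theorem stcoh_implies_bw_weak (x : ℕ → ℝ) (hx : ∀ j, 0 ≤ x j ∧ x j ≤ 1)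
    (R : ℕ → Set ℕ) (hR : ∀ i, R i = { j : ℕ | Even ⌊(2 : ℝ) ^ i * x j⌋ })
    (f : ℕ → ℕ) (hf : StrictMono f)
    (hcoh : ∀ n : ℕ, ∃ s : ℕ, ∀ i < n,
      (∀ j ≥ s, f j ∈ R i) ∨ (∀ j ≥ s, f j ∉ R i)) :
    ∀ n : ℕ, ∃ s : ℕ, ∀ v ≥ s, ∀ w ≥ s,
      |x (f v) - x (f w)| < (2 : ℝ) ^ (-(n : ℤ)) := by
  intro n
  obtain ⟨s, hs⟩ := hcoh (n + 1)
  refine ⟨s, fun v hv w hw => ?_⟩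
  have e := floor_eq_of_parity (x (f v)) (x (f w)) (hx _) (hx _) n (by
    intro i hi
    have h := hs i hi
    rw [hR i] at h
    simp only [Set.mem_setOf_eq] at h
    rcases h with h | h
    · exact iff_of_true (h v hv) (h w hw)
    · exact iff_of_false (h v hv) (h w hw))
  have h1 := Int.abs_sub_lt_one_of_floor_eq_floor e
  have hp : (0 : ℝ) < 2 ^ n := by positivity
  rw [← mul_sub, abs_mul, abs_of_pos hp] at h1
  rw [zpow_neg, zpow_natCast, ← one_div, lt_div_iff₀ hp]
  linarith
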